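/- Assume q ∉ {0, 1, −1} and n = 2θ+1 with θ ≥ 2, so k' = 2θ+2−k. In 𝒪_q(B⁺) define e_i := q^{2−δ_{i,θ}} (q − q^{−1})^{−1} z_{i'−1, i'} z_{ii} for 1 ≤ i ≤ θ, and, for 1 ≤ i ≤ θ and i < j ≤ i'−1, define E_{ij} recursively by: E_{i,i+1} := e_i; E_{ij} := e_{j−1} E_{i,j−1} − q^{−1} E_{i,j−1} e_{j−1} for i+1 < j ≤ θ+1; and E_{ij} := e_{j'} E_{i,j−1} − q^{−1+δ_{j,θ+2}} E_{i,j−1} e_{j'} for θ+1 < j ≤ i'−1. Then E_{ij} = λ_{ij} z_{j'i'} z_{ii} for all such i, j, where λ_{ij} := q^{j−i+1−δ_{j,θ+1}} (q − q^{−1})^{−1} for 1 ≤ i < j ≤ θ+1 and λ_{ij} := (−1)^{θ+1−j} v^{2(j−i)−1} (q − q^{−1})^{−1} for θ+1 < j ≤ i'−1. (These are the images ψ(E_{ij}) of the B_θ root vectors under the isomorphism ψ : U_{q^{1/2}}^Q(𝔟⁺) → 𝒪_q(B⁺).) -/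

import Mathlib

noncomputable section
open scoped TensorProduct

namespace SOq

/-- `pr n k = n + 1 - k`, the "primed" index `k'`. -/
def pr (n k : ℕ) : ℕ := n + 1 - k

/-- `2 ρ_i` as an integer. -/
def twoRho (n i : ℕ) : ℤ :=
  if 2 * i < n + 1 then (n : ℤ) - 2 * i
  else if 2 * i = n + 1 then 0
  else (n : ℤ) + 2 - 2 * i

/-- Entries of the matrix `J`: `c_{ij} = δ_{j,i'} q^{-ρ_i}` (with `q^{1/2} := v`). -/
def Jc (n : ℕ) (v : ℂ) (i j : ℕ) : ℂ :=
  if j = pr n i then v ^ (-(twoRho n i)) else 0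

/-- R-matrix coefficients `R^{ij}_{ab}`. -/
def Rc (n : ℕ) (q v : ℂ) (i j a b : ℕ) : ℂ :=
  q ^ (((if i = j then 1 else 0) - (if i = pr n j then 1 else 0) : ℤ)) *
      (if i = a then (1 : ℂ) else 0) * (if j = b then (1 : ℂ) else 0) +
    (if a < i then (1 : ℂ) else 0) * (q - q⁻¹) *
      ((if j = a then (1 : ℂ) else 0) * (if i = b then (1 : ℂ) else 0) -
        Jc n v j i * Jc n v a b)

/-- The free algebra on the generators `z_{ij}`. -/
abbrev FA : Type := FreeAlgebra ℂ (ℕ × ℕ)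

def zf (i j : ℕ) : FA := FreeAlgebra.ι ℂ (i, j)

/-- The FRT relation element `FRT(i,b,j,a)`. -/
def frtRel (n : ℕ) (q v : ℂ) (i b j a : ℕ) : FA :=
  ∑ k ∈ Finset.Icc 1 n, ∑ l ∈ Finset.Icc 1 n,
    (Rc n q v l k a b • (zf i k * zf j l) - Rc n q v j i k l • (zf k a * zf l b))

/-- Entry `(i,j)` of `z J zᵗ J⁻¹ - Id` (note `J⁻¹ = J`). -/
def orthRel₁ (n : ℕ) (v : ℂ) (i j : ℕ) : FA :=
  (∑ k ∈ Finset.Icc 1 n, ∑ l ∈ Finset.Icc 1 n, ∑ m ∈ Finset.Icc 1 n,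
      (Jc n v k l * Jc n v m j) • (zf i k * zf m l)) - (if i = j then (1 : FA) else 0)

/-- Entry `(i,j)` of `J zᵗ J⁻¹ z - Id`. -/
def orthRel₂ (n : ℕ) (v : ℂ) (i j : ℕ) : FA :=
  (∑ k ∈ Finset.Icc 1 n, ∑ l ∈ Finset.Icc 1 n, ∑ m ∈ Finset.Icc 1 n,
      (Jc n v i k * Jc n v l m) • (zf l k * zf m j)) - (if i = j then (1 : FA) else 0)

/-- The defining relations of the quantum Borel algebra `𝒪_q(B⁺) ⊆ 𝒪_q(SO_n)`. -/
inductive Rel (n : ℕ) (q v : ℂ) : FA → FA → Prop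
  | frt : ∀ i b j a : ℕ, i ∈ Finset.Icc 1 n → b ∈ Finset.Icc 1 n → j ∈ Finset.Icc 1 n →
      a ∈ Finset.Icc 1 n → Rel n q v (frtRel n q v i b j a) 0
  | orth₁ : ∀ i j : ℕ, i ∈ Finset.Icc 1 n → j ∈ Finset.Icc 1 n →
      Rel n q v (orthRel₁ n v i j) 0
  | orth₂ : ∀ i j : ℕ, i ∈ Finset.Icc 1 n → j ∈ Finset.Icc 1 n →
      Rel n q v (orthRel₂ n v i j) 0
  | lower : ∀ i j : ℕ, j < i → Rel n q v (zf i j) 0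
  | out : ∀ i j : ℕ, (i = 0 ∨ j = 0 ∨ n < i ∨ n < j) → Rel n q v (zf i j) 0

/-- The quantum Borel algebra `𝒪_q(B⁺)`. -/
abbrev OB (n : ℕ) (q v : ℂ) : Type := RingQuot (Rel n q v)

/-- The generators `z_{ij}` of `𝒪_q(B⁺)`. -/
def z (n : ℕ) (q v : ℂ) (i j : ℕ) : OB n q v :=
  RingQuot.mkAlgHom ℂ (Rel n q v) (zf i j)

end SOq

namespace SOq

/-- The scalars `λ_{ij}` for type `B_θ` (with 1-based indices); `q^{1/2} := v`. -/
def lamB (θ : ℕ) (q v : ℂ) (i j : ℕ) : ℂ :=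
  if j ≤ θ + 1 then
    q ^ (j - i + 1 - (if j = θ + 1 then 1 else 0)) * (q - q⁻¹)⁻¹
  else
    (-1 : ℂ) ^ (j - θ - 1) * v ^ (2 * (j - i) - 1) * (q - q⁻¹)⁻¹

/-!
The monomials `z_{j'i'} z_{ii}` are closed, up to scalars, under the `q`-commutators which
define the root vectors. Since the torus elements `z_{kk}` `q`-commute with every generator, such a
`q`-commutator reduces to one of two generators `z_{ab}`, `z_{bc}`, and the FRT relations rewrite
the latter as a multiple of `z_{ac} z_{bb}`, up to the prime involution; the orthogonality relation
`z_{kk} z_{k'k'} = 1` then cancels the superfluous torus factor. Beyond the middle index the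
contribution comes from the `J`-part of the `R`-matrix, whose sum is cut down to a single term by
triangularity. The scalars `λ_{ij}` satisfy the matching recursion.
-/

section PrimeInvolution

variable {n k : ℕ}

lemma pr_succ (n k : ℕ) : pr n (k + 1) = pr n k - 1 := rfl

lemma pr_mem_Icc (hk : k ∈ Finset.Icc 1 n) : pr n k ∈ Finset.Icc 1 n := by
  simp only [Finset.mem_Icc, pr] at *
  omega

lemma pr_pr (hk : k ∈ Finset.Icc 1 n) : pr n (pr n k) = k := by
  simp only [Finset.mem_Icc, pr] at *
  omega

end PrimeInvolution

section QCommutator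

variable {R A : Type*} [CommRing R] [Ring A] [Algebra R A]

/-- The `c`-twisted commutator `x y - c y x`, through which the root vectors are defined. -/
def qCommutator (c : R) (x y : A) : A := x * y - c • (y * x)

lemma qCommutator_smul_smul (c a b : R) (x y : A) :
    qCommutator c (a • x) (b • y) = (a * b) • qCommutator c x y := by
  simp only [qCommutator, smul_mul_smul_comm, smul_sub, mul_comm b a, smul_comm c]

lemma qCommutator_mul_mul {a : R} {x y g h : A} (c : R) (hgy : g * y = a • (y * g))
    (hhx : Commute h x) (hhg : Commute h g) :
    qCommutator (a * c) (x * g) (y * h) = a • (qCommutator c x y * (g * h)) := by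
  have hxy : x * g * (y * h) = a • (x * y * (g * h)) := by
    rw [mul_assoc, ← mul_assoc g, hgy]
    simp only [smul_mul_assoc, mul_smul_comm, mul_assoc]
  have hyx : y * h * (x * g) = y * x * (g * h) := by
    rw [mul_assoc, ← mul_assoc h, hhx.eq, mul_assoc, hhg.eq, mul_assoc]
  simp only [qCommutator, hxy, hyx, sub_mul, smul_mul_assoc, smul_sub, mul_smul]

end QCommutator

section RMatrix

/-- The exponent `δ_{ij} - δ_{i,j'}` of `q` in the diagonal coefficient `R^{ij}_{ij}`. -/
def diagExp (n i j : ℕ) : ℤ := (if i = j then 1 else 0) - (if i = pr n j then 1 else 0)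

lemma diagExp_of_ne {n i j : ℕ} (h : i ≠ j) (h' : i ≠ pr n j) : diagExp n i j = 0 := by
  simp [diagExp, h, h']

variable {n : ℕ} {M : Type*} [AddCommGroup M] [Module ℂ M]

lemma Jc_of_ne {v : ℂ} {i j : ℕ} (h : j ≠ pr n i) : Jc n v i j = 0 := if_neg h

lemma sum_sum_Jc_smul (v : ℂ) (f : ℕ → ℕ → M) :
    ∑ k ∈ Finset.Icc 1 n, ∑ l ∈ Finset.Icc 1 n, Jc n v k l • f k l =
      ∑ k ∈ Finset.Icc 1 n, Jc n v k (pr n k) • f k (pr n k) := by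
  refine Finset.sum_congr rfl fun k hk => Finset.sum_eq_single_of_mem _ (pr_mem_Icc hk) ?_
  intro l _ hl
  rw [Jc_of_ne hl, zero_smul]

lemma Rc_smul (q v : ℂ) (i j a b : ℕ) (x : M) :
    Rc n q v i j a b • x =
      (if i = a then if j = b then q ^ diagExp n i j • x else 0 else 0) +
        (if j = a then if i = b then (if a < i then q - q⁻¹ else 0) • x else 0 else 0) -
        ((q - q⁻¹) * Jc n v a b * Jc n v j i) • (if a < i then x else 0) := by
  rw [Rc, mul_sub, ← add_sub_assoc, sub_smul, add_smul]
  refine congr_arg₂ _ (congr_arg₂ _ ?_ ?_) ?_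
  · split_ifs <;> simp_all [diagExp]
  · split_ifs <;> simp_all
  · split_ifs <;> simp [mul_left_comm, mul_comm]

lemma sum_Rc_smul_upper (q v : ℂ) {a b : ℕ} (ha : a ∈ Finset.Icc 1 n) (hb : b ∈ Finset.Icc 1 n)
    (f : ℕ → ℕ → M) :
    ∑ k ∈ Finset.Icc 1 n, ∑ l ∈ Finset.Icc 1 n, Rc n q v l k a b • f k l =
      q ^ diagExp n a b • f b a + (if a < b then q - q⁻¹ else 0) • f a b -
        ((q - q⁻¹) * Jc n v a b) •
          ∑ k ∈ Finset.Icc 1 n with a < pr n k, Jc n v k (pr n k) • f k (pr n k) := by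
  simp only [Rc_smul, mul_smul _ (Jc n v _ _), Finset.sum_sub_distrib, Finset.sum_add_distrib,
    ← Finset.smul_sum, sum_sum_Jc_smul]
  simp [ha, hb, Finset.sum_filter]

lemma sum_Rc_smul_lower (q v : ℂ) {i j : ℕ} (hi : i ∈ Finset.Icc 1 n) (hj : j ∈ Finset.Icc 1 n)
    (f : ℕ → ℕ → M) :
    ∑ k ∈ Finset.Icc 1 n, ∑ l ∈ Finset.Icc 1 n, Rc n q v j i k l • f k l =
      q ^ diagExp n j i • f j i + (if i < j then q - q⁻¹ else 0) • f i j -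
        ((q - q⁻¹) * Jc n v i j) •
          ∑ k ∈ Finset.Icc 1 n with k < j, Jc n v k (pr n k) • f k (pr n k) := by
  simp only [Rc_smul, mul_right_comm _ _ (Jc n v i j), mul_smul _ (Jc n v _ _),
    Finset.sum_sub_distrib, Finset.sum_add_distrib, ← Finset.smul_sum, sum_sum_Jc_smul]
  simp [hi, hj, Finset.sum_filter]

lemma Jc_pr_mul_Jc_pr {v : ℂ} (hv : v ≠ 0) {k : ℕ} (hk : k ∈ Finset.Icc 1 n) :
    Jc n v k (pr n k) * Jc n v (pr n k) k = 1 := by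
  have hρ : -twoRho n k + -twoRho n (pr n k) = 0 := by
    simp only [Finset.mem_Icc, twoRho, pr] at *
    split_ifs <;> omega
  rw [Jc, Jc, if_pos rfl, if_pos (pr_pr hk).symm, ← zpow_add₀ hv, hρ, zpow_zero]

end RMatrix

section Generators

variable {n : ℕ} {q v : ℂ}

lemma mkAlgHom_zf (i j : ℕ) : RingQuot.mkAlgHom ℂ (Rel n q v) (zf i j) = z n q v i j := rfl

lemma z_eq_zero_of_lt {i j : ℕ} (h : j < i) : z n q v i j = 0 := by
  rw [← mkAlgHom_zf, RingQuot.mkAlgHom_rel ℂ (Rel.lower i j h), map_zero]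

lemma z_frt {i b j a : ℕ} (hi : i ∈ Finset.Icc 1 n) (hb : b ∈ Finset.Icc 1 n)
    (hj : j ∈ Finset.Icc 1 n) (ha : a ∈ Finset.Icc 1 n) :
    q ^ diagExp n a b • (z n q v i b * z n q v j a) +
        (if a < b then q - q⁻¹ else 0) • (z n q v i a * z n q v j b) -
        ((q - q⁻¹) * Jc n v a b) • ∑ k ∈ Finset.Icc 1 n with a < pr n k,
          Jc n v k (pr n k) • (z n q v i k * z n q v j (pr n k)) =
      q ^ diagExp n j i • (z n q v j a * z n q v i b) +
        (if i < j then q - q⁻¹ else 0) • (z n q v i a * z n q v j b) -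
        ((q - q⁻¹) * Jc n v i j) • ∑ k ∈ Finset.Icc 1 n with k < j,
          Jc n v k (pr n k) • (z n q v k a * z n q v (pr n k) b) := by
  have h := RingQuot.mkAlgHom_rel ℂ (Rel.frt (q := q) (v := v) i b j a hi hb hj ha)
  simp only [frtRel, map_sum, map_sub, map_smul, map_mul, map_zero, mkAlgHom_zf,
    Finset.sum_sub_distrib, sub_eq_zero] at h
  rwa [sum_Rc_smul_upper q v ha hb fun k l => z n q v i k * z n q v j l,
    sum_Rc_smul_lower q v hi hj fun k l => z n q v k a * z n q v l b] at h

lemma z_diag_mul_z {k i j : ℕ} (hk : k ∈ Finset.Icc 1 n) (hi : i ∈ Finset.Icc 1 n)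
    (hj : j ∈ Finset.Icc 1 n) :
    q ^ diagExp n j k • (z n q v k k * z n q v i j) =
      q ^ diagExp n i k • (z n q v i j * z n q v k k) := by
  have hleft : (if j < k then q - q⁻¹ else 0) • (z n q v k j * z n q v i k) = 0 := by
    split_ifs with h <;> simp [h, z_eq_zero_of_lt]
  have hright : (if k < i then q - q⁻¹ else 0) • (z n q v k j * z n q v i k) = 0 := by
    split_ifs with h <;> simp [h, z_eq_zero_of_lt]
  have hupper : ((q - q⁻¹) * Jc n v j k) • ∑ p ∈ Finset.Icc 1 n with j < pr n p,
      Jc n v p (pr n p) • (z n q v k p * z n q v i (pr n p)) = 0 := by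
    by_cases hkj : k = pr n j
    · rw [Finset.sum_eq_zero, smul_zero]
      intro p hp
      obtain ⟨-, hjp⟩ := Finset.mem_filter.1 hp
      have hpk : p < k := by unfold pr at *; omega
      rw [z_eq_zero_of_lt hpk, zero_mul, smul_zero]
    · rw [Jc_of_ne hkj, mul_zero, zero_smul]
  have hlower : ((q - q⁻¹) * Jc n v k i) • ∑ p ∈ Finset.Icc 1 n with p < i,
      Jc n v p (pr n p) • (z n q v p j * z n q v (pr n p) k) = 0 := by
    by_cases hik : i = pr n k
    · rw [Finset.sum_eq_zero, smul_zero]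
      intro p hp
      obtain ⟨-, hpi⟩ := Finset.mem_filter.1 hp
      have hkp : k < pr n p := by unfold pr at *; omega
      rw [z_eq_zero_of_lt hkp, mul_zero, smul_zero]
    · rw [Jc_of_ne hik, mul_zero, zero_smul]
  simpa only [hleft, hright, hupper, hlower, add_zero, sub_zero]
    using z_frt (q := q) (v := v) hk hk hi hj

lemma commute_z_diag {k i j : ℕ} (hk : k ∈ Finset.Icc 1 n) (hi : i ∈ Finset.Icc 1 n)
    (hj : j ∈ Finset.Icc 1 n) (hik : i ≠ k) (hik' : i ≠ pr n k) (hjk : j ≠ k)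
    (hjk' : j ≠ pr n k) : Commute (z n q v k k) (z n q v i j) := by
  have h := z_diag_mul_z (q := q) (v := v) hk hi hj
  rwa [diagExp_of_ne hik hik', diagExp_of_ne hjk hjk', zpow_zero, one_smul, one_smul] at h

lemma z_diag_mul_z_diag_pr (hv : v ≠ 0) {k : ℕ} (hk : k ∈ Finset.Icc 1 n) :
    z n q v k k * z n q v (pr n k) (pr n k) = 1 := by
  have h := RingQuot.mkAlgHom_rel ℂ (Rel.orth₁ (q := q) (v := v) k k hk hk)
  simp only [orthRel₁, map_sum, map_sub, map_smul, map_mul, map_zero, mkAlgHom_zf, if_true,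
    map_one, sub_eq_zero] at h
  have hzero : ∀ p ∈ Finset.Icc 1 n, p ≠ k → ∀ m ∈ Finset.Icc 1 n,
      Jc n v m k • (z n q v k p * z n q v m (pr n p)) = 0 := by
    intro p hp hpk m hm
    by_cases hkm : k = pr n m
    · have hlt : p < k ∨ pr n p < m := by
        simp only [Finset.mem_Icc, pr] at *
        omega
      rcases hlt with h | h <;> simp [z_eq_zero_of_lt h]
    · rw [Jc_of_ne hkm, zero_smul]
  have hJ : ∀ m ∈ Finset.Icc 1 n, m ≠ pr n k → Jc n v m k = 0 := by
    rintro m hm hmk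
    exact Jc_of_ne fun hkm => hmk (hkm ▸ (pr_pr hm).symm)
  simp only [mul_smul, ← Finset.smul_sum,
    sum_sum_Jc_smul v fun p l => ∑ m ∈ Finset.Icc 1 n, Jc n v m k • (z n q v k p * z n q v m l)]
    at h
  rwa [Finset.sum_eq_single_of_mem k hk fun p hp hpk => by
      rw [Finset.sum_eq_zero (hzero p hp hpk), smul_zero],
    Finset.sum_eq_single_of_mem (pr n k) (pr_mem_Icc hk) fun m hm hmk => by
      rw [hJ m hm hmk, zero_smul],
    smul_smul, Jc_pr_mul_Jc_pr hv hk, one_smul] at h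

lemma qCommutator_one_z {i b j a : ℕ} (hi : i ∈ Finset.Icc 1 n) (hb : b ∈ Finset.Icc 1 n)
    (hj : j ∈ Finset.Icc 1 n) (ha : a ∈ Finset.Icc 1 n) (hij : i < j) (hba : b < a)
    (hij' : j ≠ pr n i) (hba' : a ≠ pr n b) :
    qCommutator (1 : ℂ) (z n q v i b) (z n q v j a) =
      (q - q⁻¹) • (z n q v i a * z n q v j b) := by
  have hba'' : b ≠ pr n a := by
    rintro rfl
    exact hba' (pr_pr ha).symm
  have h := z_frt (q := q) (v := v) hi hb hj ha
  simp only [diagExp_of_ne hba.ne' hba', diagExp_of_ne hij.ne' hij', Jc_of_ne hba'', Jc_of_ne hij',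
    if_pos hij, if_neg hba.not_gt, zpow_zero, one_smul, zero_smul, mul_zero, add_zero,
    sub_zero] at h
  rw [qCommutator, one_smul, h, add_sub_cancel_left]

lemma qCommutator_z_pr_succ {m a : ℕ} (hm : 1 ≤ m) (hmn : 2 * m < n) (hma : pr n m < a)
    (han : a ≤ n) :
    qCommutator (q ^ diagExp n (m + 1) (pr n (m + 1))) (z n q v (pr n (m + 1)) (pr n m))
        (z n q v (m + 1) a) =
      -((q - q⁻¹) * (Jc n v (pr n (m + 1)) (m + 1) * Jc n v m (pr n m))) •
        (z n q v m a * z n q v (pr n m) (pr n m)) := by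
  have hm_mem : m ∈ Finset.Icc 1 n := by simp; omega
  have hm_succ : m + 1 ∈ Finset.Icc 1 n := by simp; omega
  have hm_pr := pr_mem_Icc hm_mem
  have ham : a ≠ pr n (pr n m) := by unfold pr at *; omega
  have hJ : pr n m ≠ pr n a := by unfold pr at *; omega
  have hle : ¬pr n (m + 1) < m + 1 := by unfold pr at *; omega
  have hsum : ∑ k ∈ Finset.Icc 1 n with k < m + 1,
      Jc n v k (pr n k) • (z n q v k a * z n q v (pr n k) (pr n m)) =
        Jc n v m (pr n m) • (z n q v m a * z n q v (pr n m) (pr n m)) := by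
    refine Finset.sum_eq_single_of_mem m (by simp; omega) fun k hk hkm => ?_
    have hlt : pr n m < pr n k := by
      simp only [Finset.mem_filter, Finset.mem_Icc, pr] at *
      omega
    rw [z_eq_zero_of_lt hlt, mul_zero, smul_zero]
  have h := z_frt (q := q) (v := v) (pr_mem_Icc hm_succ) hm_pr hm_succ
    (Finset.mem_Icc.2 ⟨by omega, han⟩)
  simp only [diagExp_of_ne hma.ne' ham, Jc_of_ne hJ, hsum, if_neg hle, if_neg hma.not_gt,
    zpow_zero, one_smul, zero_smul, mul_zero, add_zero, sub_zero, smul_smul, mul_assoc] at h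
  rw [qCommutator, h, sub_sub_cancel_left]
  exact (neg_smul _ _).symm

end Generators

section RootMonomials

/-- The monomial `z_{j'i'} z_{ii}`, which is the root vector `E_{ij}` up to a scalar. -/
def rootMonomial (n : ℕ) (q v : ℂ) (i j : ℕ) : OB n q v :=
  z n q v (pr n j) (pr n i) * z n q v i i

variable {n : ℕ} {q v : ℂ} {i j m : ℕ}

lemma qCommutator_rootMonomial (c : ℂ) (hi : 1 ≤ i) (him : i < m) (hmn : 2 * m < n)
    (hj : j ∈ Finset.Icc 1 n) :
    qCommutator (q ^ diagExp n (pr n j) m * c) (rootMonomial n q v m (m + 1))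
        (rootMonomial n q v i j) =
      q ^ diagExp n (pr n j) m • (qCommutator c (z n q v (pr n (m + 1)) (pr n m))
        (z n q v (pr n j) (pr n i)) * (z n q v m m * z n q v i i)) := by
  have hi_mem : i ∈ Finset.Icc 1 n := by simp; omega
  have hm_mem : m ∈ Finset.Icc 1 n := by simp; omega
  have hm_succ : m + 1 ∈ Finset.Icc 1 n := by simp; omega
  refine qCommutator_mul_mul c ?_ ?_ ?_
  · have h := z_diag_mul_z (q := q) (v := v) hm_mem (pr_mem_Icc hj) (pr_mem_Icc hi_mem)
    rwa [diagExp_of_ne (i := pr n i) (by unfold pr; omega) (by unfold pr; omega), zpow_zero,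
      one_smul] at h
  · apply commute_z_diag hi_mem (pr_mem_Icc hm_succ) (pr_mem_Icc hm_mem) <;> unfold pr <;> omega
  · have hmi' : m ≠ pr n i := by unfold pr; omega
    exact commute_z_diag hi_mem hm_mem hm_mem him.ne' hmi' him.ne' hmi'

lemma mul_z_diag_pr_mul (hv : v ≠ 0) (hm : m ∈ Finset.Icc 1 n) (x y : OB n q v) :
    x * z n q v (pr n m) (pr n m) * (z n q v m m * y) = x * y := by
  have h := z_diag_mul_z_diag_pr (q := q) hv (pr_mem_Icc hm)
  rw [pr_pr hm] at h
  rw [mul_assoc, ← mul_assoc _ (z n q v m m), h, one_mul]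

lemma qCommutator_rootMonomial_succ (hv : v ≠ 0) (hi : 1 ≤ i) (him : i < m)
    (hmn : 2 * m < n) :
    qCommutator q⁻¹ (rootMonomial n q v m (m + 1)) (rootMonomial n q v i m) =
      (q⁻¹ * (q - q⁻¹)) • rootMonomial n q v i (m + 1) := by
  have hi_mem : i ∈ Finset.Icc 1 n := by simp; omega
  have hm_mem : m ∈ Finset.Icc 1 n := by simp; omega
  have hm_succ : m + 1 ∈ Finset.Icc 1 n := by simp; omega
  have hexp : diagExp n (pr n m) m = -1 := by
    have hne : pr n m ≠ m := by unfold pr; omega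
    simp [diagExp, hne]
  have hcomm := qCommutator_one_z (q := q) (v := v) (pr_mem_Icc hm_succ) (pr_mem_Icc hm_mem)
    (pr_mem_Icc hm_mem) (pr_mem_Icc hi_mem) (by unfold pr; omega) (by unfold pr; omega)
    (by unfold pr; omega) (by unfold pr; omega)
  have h := qCommutator_rootMonomial (q := q) (v := v) 1 hi him hmn hm_mem
  rwa [hexp, zpow_neg_one, mul_one, hcomm, smul_mul_assoc, mul_z_diag_pr_mul hv hm_mem,
    smul_smul] at h

lemma qCommutator_rootMonomial_pr (hv : v ≠ 0) (hi : 1 ≤ i) (him : i < m)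
    (hmn : 2 * m < n) :
    qCommutator (q ^ diagExp n (m + 1) (pr n (m + 1))) (rootMonomial n q v m (m + 1))
        (rootMonomial n q v i (pr n (m + 1))) =
      -((q - q⁻¹) * (Jc n v (pr n (m + 1)) (m + 1) * Jc n v m (pr n m))) •
        rootMonomial n q v i (pr n m) := by
  have hm_mem : m ∈ Finset.Icc 1 n := by simp; omega
  have hm_succ : m + 1 ∈ Finset.Icc 1 n := by simp; omega
  have hexp : diagExp n (m + 1) m = 0 := diagExp_of_ne (by omega) (by unfold pr; omega)
  have hcomm := qCommutator_z_pr_succ (q := q) (v := v) (m := m) (a := pr n i) (by omega) hmn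
    (by unfold pr; omega) (by unfold pr; omega)
  have hmono : rootMonomial n q v i (pr n m) = z n q v m (pr n i) * z n q v i i := by
    rw [rootMonomial, pr_pr hm_mem]
  have h := qCommutator_rootMonomial (q := q) (v := v) (q ^ diagExp n (m + 1) (pr n (m + 1))) hi
    him hmn (pr_mem_Icc hm_succ)
  rwa [pr_pr hm_succ, hexp, zpow_zero, one_mul, one_smul, hcomm, smul_mul_assoc,
    mul_z_diag_pr_mul hv hm_mem, ← hmono] at h

end RootMonomials

section Scalars

variable {θ i j m : ℕ} {q v : ℂ}

lemma lamB_of_le (q v : ℂ) (i : ℕ) (hj : j ≤ θ) :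
    lamB θ q v i j = q ^ (j - i + 1) * (q - q⁻¹)⁻¹ := by
  rw [lamB, if_pos (by omega), if_neg (by omega), Nat.sub_zero]

lemma lamB_middle (θ : ℕ) (q v : ℂ) (i : ℕ) :
    lamB θ q v i (θ + 1) = q ^ (θ + 1 - i) * (q - q⁻¹)⁻¹ := by
  rw [lamB, if_pos le_rfl, if_pos rfl, Nat.add_sub_cancel]

lemma lamB_pr (q v : ℂ) (hi : i ≤ θ) (hm : m ≤ θ) :
    lamB θ q v i (pr (2 * θ + 1) m) =
      (-1) ^ (θ - m + 1) * v ^ (2 * (2 * θ + 1 - m - i) + 1) * (q - q⁻¹)⁻¹ := by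
  have hsign : pr (2 * θ + 1) m - θ - 1 = θ - m + 1 := by unfold pr; omega
  have hexp : 2 * (pr (2 * θ + 1) m - i) - 1 = 2 * (2 * θ + 1 - m - i) + 1 := by unfold pr; omega
  rw [lamB, if_neg (by unfold pr; omega), hsign, hexp]

lemma lamB_self_succ (q v : ℂ) (hi : i ≤ θ) :
    lamB θ q v i (i + 1) = q ^ (2 - (if i = θ then 1 else 0)) * (q - q⁻¹)⁻¹ := by
  rcases hi.eq_or_lt with rfl | hi
  · rw [lamB_middle, if_pos rfl, Nat.add_sub_cancel_left]
  · rw [lamB_of_le q v i (show i + 1 ≤ θ from hi), if_neg hi.ne, Nat.add_sub_cancel_left]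

lemma lamB_mul_succ (hq : q ≠ 0) (hd : q - q⁻¹ ≠ 0) (hij : i ≤ j) (hj : j ≤ θ) :
    lamB θ q v j (j + 1) * lamB θ q v i j * (q⁻¹ * (q - q⁻¹)) = lamB θ q v i (j + 1) := by
  rw [lamB_self_succ q v hj, lamB_of_le q v i hj]
  rcases hj.eq_or_lt with rfl | hj
  · rw [lamB_middle, if_pos rfl, Nat.sub_add_comm hij]
    generalize q - q⁻¹ = d at *
    field_simp
    norm_num
  · rw [lamB_of_le q v i (show j + 1 ≤ θ from hj), if_neg hj.ne, Nat.sub_add_comm hij]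
    generalize q - q⁻¹ = d at *
    field_simp
    ring

lemma Jc_mul_Jc (hv : v ≠ 0) (hm : m ≤ θ) :
    Jc (2 * θ + 1) v (pr (2 * θ + 1) (m + 1)) (m + 1) *
        Jc (2 * θ + 1) v m (pr (2 * θ + 1) m) = v ^ (if m = θ then -1 else -2 : ℤ) := by
  have hmem : m + 1 ∈ Finset.Icc 1 (2 * θ + 1) := by simp; omega
  have hρ : -twoRho (2 * θ + 1) (pr (2 * θ + 1) (m + 1)) + -twoRho (2 * θ + 1) m =
      if m = θ then -1 else -2 := by
    unfold twoRho pr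
    split_ifs <;> omega
  rw [Jc, Jc, if_pos (pr_pr hmem).symm, if_pos rfl, ← zpow_add₀ hv, hρ]

lemma lamB_mul_pr (hv : v ≠ 0) (hqv : v ^ 2 = q) (hd : q - q⁻¹ ≠ 0) (hi : i ≤ θ) (hm : m ≤ θ) :
    lamB θ q v m (m + 1) * lamB θ q v i (pr (2 * θ + 1) (m + 1)) *
        -((q - q⁻¹) * v ^ (if m = θ then -1 else -2 : ℤ)) =
      lamB θ q v i (pr (2 * θ + 1) m) := by
  rw [lamB_self_succ q v hm, lamB_pr q v hi hm]
  rcases hm.eq_or_lt with rfl | hm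
  · have hpr : pr (2 * m + 1) (m + 1) = m + 1 := by unfold pr; omega
    have hexp : 2 * m + 1 - m - i = m + 1 - i := by omega
    rw [hpr, hexp, lamB_middle, if_pos rfl, if_pos rfl, pow_succ v, pow_mul, hqv, zpow_neg_one,
      Nat.sub_self]
    generalize q - q⁻¹ = d at *
    subst q
    field_simp
    ring
  · have hexp : 2 * θ + 1 - m - i = 2 * θ + 1 - (m + 1) - i + 1 := by omega
    have hsign : θ - m = θ - (m + 1) + 1 := by omega
    rw [lamB_pr q v (by omega) hm, if_neg hm.ne, if_neg hm.ne, hexp, hsign]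
    generalize q - q⁻¹ = d at *
    subst q
    field_simp
    ring

end Scalars

section RootVectors

/-- The closed form `λ_{ij} z_{j'i'} z_{ii}` of the root vector `E_{ij}` of type `B_θ`. -/
def rootVector (θ : ℕ) (q v : ℂ) (i j : ℕ) : OB (2 * θ + 1) q v :=
  lamB θ q v i j • rootMonomial (2 * θ + 1) q v i j

variable {θ i j : ℕ} {q v : ℂ}

lemma rootVector_self_succ (q v : ℂ) (hi : i ≤ θ) :
    rootVector θ q v i (i + 1) = (q ^ (2 - (if i = θ then 1 else 0)) * (q - q⁻¹)⁻¹) •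
      (z (2 * θ + 1) q v (pr (2 * θ + 1) i - 1) (pr (2 * θ + 1) i) * z (2 * θ + 1) q v i i) := by
  rw [rootVector, lamB_self_succ q v hi, rootMonomial, pr_succ]

lemma qCommutator_rootVector_succ (hq : q ≠ 0) (hv : v ≠ 0) (hd : q - q⁻¹ ≠ 0) (hi : 1 ≤ i)
    (hij : i < j) (hj : j ≤ θ) :
    qCommutator q⁻¹ (rootVector θ q v j (j + 1)) (rootVector θ q v i j) =
      rootVector θ q v i (j + 1) := by
  rw [rootVector, rootVector, qCommutator_smul_smul,
    qCommutator_rootMonomial_succ hv hi hij (by omega), smul_smul, lamB_mul_succ hq hd hij.le hj,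
    rootVector]

lemma qCommutator_rootVector_of_gt (hv : v ≠ 0) (hqv : v ^ 2 = q) (hd : q - q⁻¹ ≠ 0) (hi : 1 ≤ i)
    (hθj : θ < j) (hj : j + 1 ≤ pr (2 * θ + 1) i - 1) :
    qCommutator (q ^ (-1 + if j + 1 = θ + 2 then 1 else 0 : ℤ))
        (rootVector θ q v (pr (2 * θ + 1) (j + 1)) (pr (2 * θ + 1) (j + 1) + 1))
        (rootVector θ q v i j) =
      rootVector θ q v i (j + 1) := by
  obtain ⟨m, hm⟩ : ∃ m, m = pr (2 * θ + 1) (j + 1) := ⟨_, rfl⟩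
  have him : i < m := by unfold pr at *; omega
  have hmθ : m ≤ θ := by unfold pr at *; omega
  have hjm : j = pr (2 * θ + 1) (m + 1) := by unfold pr at *; omega
  have hjm' : j + 1 = pr (2 * θ + 1) m := by unfold pr at *; omega
  have hexp : (-1 + if j + 1 = θ + 2 then 1 else 0 : ℤ) =
      diagExp (2 * θ + 1) (m + 1) (pr (2 * θ + 1) (m + 1)) := by
    unfold diagExp pr at *
    split_ifs <;> omega
  rw [hexp, ← hm, hjm', hjm, rootVector, rootVector, qCommutator_smul_smul,
    qCommutator_rootMonomial_pr hv hi him (by omega), Jc_mul_Jc hv hmθ, smul_smul,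
    lamB_mul_pr hv hqv hd (him.le.trans hmθ) hmθ, rootVector]

end RootVectors

/-- The images of the `B_θ` root vectors in `𝒪_q(B⁺) ⊆ 𝒪_q(SO_{2θ+1})`:
the recursively defined `E_{ij}` equal `λ_{ij} z_{j'i'} z_{ii}`. -/
theorem rootvectors_B (θ : ℕ) (hθ : 2 ≤ θ) (q v : ℂ) (hq0 : q ≠ 0) (hq1 : q ≠ 1)
    (hqm1 : q ≠ -1) (hv : v ^ 2 = q)
    (e : ℕ → OB (2 * θ + 1) q v) (E : ℕ → ℕ → OB (2 * θ + 1) q v)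
    (he : ∀ i : ℕ, 1 ≤ i → i ≤ θ →
      e i = (q ^ (2 - (if i = θ then 1 else 0)) * (q - q⁻¹)⁻¹) •
        (z (2 * θ + 1) q v (pr (2 * θ + 1) i - 1) (pr (2 * θ + 1) i) *
          z (2 * θ + 1) q v i i))
    (hE0 : ∀ i : ℕ, 1 ≤ i → i ≤ θ → E i (i + 1) = e i)
    (hE1 : ∀ i j : ℕ, 1 ≤ i → i + 1 < j → j ≤ θ + 1 →
      E i j = e (j - 1) * E i (j - 1) - q⁻¹ • (E i (j - 1) * e (j - 1)))
    (hE2 : ∀ i j : ℕ, 1 ≤ i → θ + 1 < j → j ≤ pr (2 * θ + 1) i - 1 →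
      E i j = e (pr (2 * θ + 1) j) * E i (j - 1) -
        (q ^ ((-1 : ℤ) + (if j = θ + 2 then 1 else 0))) •
          (E i (j - 1) * e (pr (2 * θ + 1) j))) :
    ∀ i j : ℕ, 1 ≤ i → i ≤ θ → i < j → j ≤ pr (2 * θ + 1) i - 1 →
      E i j = lamB θ q v i j •
        (z (2 * θ + 1) q v (pr (2 * θ + 1) j) (pr (2 * θ + 1) i) * z (2 * θ + 1) q v i i) := by
  have hv0 : v ≠ 0 := by
    rintro rfl
    exact hq0 (hv ▸ zero_pow two_ne_zero)
  have hd : q - q⁻¹ ≠ 0 := by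
    simp [sub_eq_zero, self_eq_inv₀, hq0, hq1, hqm1]
  have he' (m : ℕ) (hm1 : 1 ≤ m) (hm : m ≤ θ) : e m = rootVector θ q v m (m + 1) :=
    (he m hm1 hm).trans (rootVector_self_succ q v hm).symm
  intro i j hi hiθ hij
  change _ → E i j = rootVector θ q v i j
  induction j, hij using Nat.le_induction with
  | base => exact fun _ => (hE0 i hi hiθ).trans (he' i hi hiθ)
  | succ j hij ih =>
    intro hj
    specialize ih (by omega)
    rcases le_or_gt j θ with hjθ | hθj
    · rw [hE1 i (j + 1) hi (by omega) (by omega), Nat.add_sub_cancel, ih, he' j (by omega) hjθ]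
      exact qCommutator_rootVector_succ hq0 hv0 hd hi hij hjθ
    · rw [hE2 i (j + 1) hi (by omega) hj, Nat.add_sub_cancel, ih,
        he' _ (by unfold pr at *; omega) (by unfold pr; omega)]
      exact qCommutator_rootVector_of_gt hv0 hv hd hi hθj hj

end SOq
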